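/- arXiv:2011.05173 — 6 statements merged into one kernel-verified Lean document; each statement's English description precedes it below -/
import Mathlib

section
/- Let R be a principal ideal domain and let n be a natural number. Let A, B be n×n matrices over R. If the matrix equation B·X = A has at least one solution X in the n×n matrices over R, then there exists an n×n matrix F over R such that B·F = A and for every n×n matrix X with B·X = A there exists an n×n matrix M with X = F·M. (In other words, a left greatest common divisor of the set of solutions of a solvable equation B·X = A exists and is itself a solution.) -/
/-!
A solution `F` whose column space contains `ker B` has column space `B⁻¹(range A)`, which contains
the columns of every solution; columns lift through `F` because the source is free, so `F`
left-divides every solution. To obtain such an `F`, keep a given solution on a complement of `ker A`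
and replace it on `ker A` by a surjection `ker A → ker B`. Over a Bézout domain these kernels are
free, and `range A ≤ range B` makes the rank of `ker A` at least that of `ker B`.
-/

open LinearMap Module

section Ring

variable {R U V W : Type*} [Ring R] [AddCommGroup U] [Module R U] [AddCommGroup V] [Module R V]
  [AddCommGroup W] [Module R W]

theorem exists_linearEquiv_ker_prod_range (f : U →ₗ[R] V) [Projective R (range f)] :
    ∃ e : U ≃ₗ[R] ker f × range f, ∀ k : ker f, e k = (k, 0) := by
  have hexact : Function.Exact (ker f).subtype f.rangeRestrict := by
    rw [exact_iff, ker_rangeRestrict, Submodule.range_subtype]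
  obtain ⟨e, he, -⟩ := ((hexact.split_tfae (ker f).injective_subtype
    f.surjective_rangeRestrict).out 0 2).mp
    (f.rangeRestrict.exists_rightInverse_of_surjective f.range_rangeRestrict)
  exact ⟨e, fun k => e.eq_symm_apply.mp (LinearMap.congr_fun he k)⟩

theorem finite_ker_of_projective_range [Module.Finite R U] (f : U →ₗ[R] V)
    [Projective R (range f)] : Module.Finite R (ker f) := by
  obtain ⟨e, -⟩ := exists_linearEquiv_ker_prod_range f
  exact .of_surjective (fst R _ _ ∘ₗ e.toLinearMap) (Prod.fst_surjective.comp e.surjective)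

theorem exists_eq_comp_of_range_le_range [Projective R U] {f : V →ₗ[R] W} {x : U →ₗ[R] W}
    (h : range x ≤ range f) : ∃ m : U →ₗ[R] V, x = f ∘ₗ m := by
  obtain ⟨m, hm⟩ := projective_lifting_property f.rangeRestrict
    (x.codRestrict (range f) fun u => h ⟨u, rfl⟩) f.surjective_rangeRestrict
  exact ⟨m, LinearMap.ext fun u => congrArg Subtype.val (LinearMap.congr_fun hm u).symm⟩

theorem range_le_range_of_comp_eq_comp {b : V →ₗ[R] W} {f x : U →ₗ[R] V}
    (hker : ker b ≤ range f) (h : b ∘ₗ x = b ∘ₗ f) : range x ≤ range f := by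
  rintro _ ⟨u, rfl⟩
  have hdiff : x u - f u ∈ ker b := by
    rw [sub_mem_ker_iff]
    exact LinearMap.congr_fun h u
  exact (Submodule.sub_mem_iff_left _ (mem_range_self f u)).mp (hker hdiff)

theorem exists_comp_eq_comp_and_ker_le_range (b : V →ₗ[R] W) (x : U →ₗ[R] V)
    [Projective R (range (b ∘ₗ x))] {s : ker (b ∘ₗ x) →ₗ[R] ker b}
    (hs : Function.Surjective s) :
    ∃ f : U →ₗ[R] V, b ∘ₗ f = b ∘ₗ x ∧ ker b ≤ range f := by
  obtain ⟨e, he⟩ := exists_linearEquiv_ker_prod_range (b ∘ₗ x)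
  let p : U →ₗ[R] ker (b ∘ₗ x) := fst R _ _ ∘ₗ e.toLinearMap
  let f : U →ₗ[R] V := x ∘ₗ (.id - (ker (b ∘ₗ x)).subtype ∘ₗ p) + (ker b).subtype ∘ₗ s ∘ₗ p
  have f_apply (u : U) : f u = x (u - p u) + s (p u) := rfl
  have f_ker (k : ker (b ∘ₗ x)) : f k = s k := by
    have hp : p k = k := congrArg Prod.fst (he k)
    rw [f_apply, hp, sub_self, map_zero, zero_add]
  refine ⟨f, LinearMap.ext fun u => ?_, fun v hv => ?_⟩
  · have hpu : b (x (p u)) = 0 := (p u).2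
    have hspu : b (s (p u)) = 0 := (s (p u)).2
    rw [comp_apply, comp_apply, f_apply, map_add, map_sub, map_sub, hpu, hspu, sub_zero, add_zero]
  · obtain ⟨k, hk⟩ := hs ⟨v, hv⟩
    exact ⟨k, by rw [f_ker, hk]⟩

end Ring

theorem exists_surjective_of_finrank_le {R K L : Type*} [Semiring R] [StrongRankCondition R]
    [AddCommMonoid K] [Module R K] [Free R K] [Module.Finite R K]
    [AddCommMonoid L] [Module R L] [Free R L] [Module.Finite R L]
    (h : finrank R K ≤ finrank R L) : ∃ s : L →ₗ[R] K, Function.Surjective s := by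
  let eK := (finBasis R K).equivFun
  let eL := (finBasis R L).equivFun
  have restrict_surjective := funLeft_surjective_of_injective R R _ (Fin.castLE_injective h)
  exact ⟨eK.symm.toLinearMap ∘ₗ funLeft R R (Fin.castLE h) ∘ₗ eL.toLinearMap,
    eK.symm.surjective.comp (restrict_surjective.comp eL.surjective)⟩

theorem free_ideal_of_isPrincipal {R : Type*} [CommRing R] [IsDomain R] (I : Ideal R)
    [I.IsPrincipal] : Free R I := by
  obtain ⟨x, rfl⟩ := Submodule.IsPrincipal.principal I
  by_cases hx : x = 0
  · rw [hx, Submodule.span_zero_singleton]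
    infer_instance
  · exact .of_equiv (LinearEquiv.toSpanNonzeroSingleton R R x hx)

section BezoutDomain

variable {R : Type*} [CommRing R] [IsDomain R] [IsBezout R]

theorem free_of_injective_fin_pi {M : Type*} [AddCommGroup M] [Module R M] [Module.Finite R M]
    {k : ℕ} {f : M →ₗ[R] Fin k → R} (hf : Function.Injective f) : Free R M := by
  induction k generalizing M with
  | zero =>
    have := hf.subsingleton
    infer_instance
  | succ k ih =>
    let φ : M →ₗ[R] R := proj 0 ∘ₗ f
    have : (range φ).IsPrincipal :=
      IsBezout.isPrincipal_of_FG _ (Module.Finite.iff_fg.mp inferInstance)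
    have : Free R (range φ) := free_ideal_of_isPrincipal _
    have : Module.Finite R (ker φ) := finite_ker_of_projective_range φ
    have : Free R (ker φ) := by
      refine ih (f := funLeft R R Fin.succ ∘ₗ f ∘ₗ (ker φ).subtype) fun x y hxy => ?_
      have head_eq : f x 0 = f y 0 := x.2.trans y.2.symm
      exact Subtype.ext <| hf <| funext <| Fin.cases head_eq (congrFun hxy)
    obtain ⟨e, -⟩ := exists_linearEquiv_ker_prod_range φ
    exact .of_equiv e.symm

theorem free_submodule_of_finite {M : Type*} [AddCommGroup M] [Module R M] [Free R M]
    [Module.Finite R M] (N : Submodule R M) [Module.Finite R N] : Free R N :=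
  free_of_injective_fin_pi (f := (finBasis R M).equivFun.toLinearMap ∘ₗ N.subtype)
    ((finBasis R M).equivFun.injective.comp N.injective_subtype)

variable {U V W : Type*} [AddCommGroup U] [Module R U] [Free R U] [Module.Finite R U]
  [AddCommGroup V] [Module R V] [Free R V] [Module.Finite R V]
  [AddCommGroup W] [Module R W] [Free R W] [Module.Finite R W]

theorem exists_surjective_ker_of_range_le_range {a : U →ₗ[R] W} {b : V →ₗ[R] W}
    (hrange : range a ≤ range b) (hUV : finrank R V ≤ finrank R U) :
    ∃ s : ker a →ₗ[R] ker b, Function.Surjective s := by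
  have : Free R (range a) := free_submodule_of_finite _
  have : Free R (range b) := free_submodule_of_finite _
  have : Module.Finite R (ker a) := finite_ker_of_projective_range a
  have : Module.Finite R (ker b) := finite_ker_of_projective_range b
  have : Free R (ker a) := free_submodule_of_finite _
  have : Free R (ker b) := free_submodule_of_finite _
  obtain ⟨ea, -⟩ := exists_linearEquiv_ker_prod_range a
  obtain ⟨eb, -⟩ := exists_linearEquiv_ker_prod_range b
  have rank_U : finrank R U = finrank R (ker a) + finrank R (range a) := by
    rw [ea.finrank_eq, finrank_prod]
  have rank_V : finrank R V = finrank R (ker b) + finrank R (range b) := by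
    rw [eb.finrank_eq, finrank_prod]
  have rank_range : finrank R (range a) ≤ finrank R (range b) := Submodule.finrank_mono hrange
  exact exists_surjective_of_finrank_le (by lia)

theorem exists_comp_eq_comp_and_forall_eq_comp (b : V →ₗ[R] W) (x₀ : U →ₗ[R] V)
    (hUV : finrank R V ≤ finrank R U) :
    ∃ f : U →ₗ[R] V, b ∘ₗ f = b ∘ₗ x₀ ∧
      ∀ x : U →ₗ[R] V, b ∘ₗ x = b ∘ₗ x₀ → ∃ m : U →ₗ[R] U, x = f ∘ₗ m := by
  have : Free R (range (b ∘ₗ x₀)) := free_submodule_of_finite _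
  obtain ⟨s, hs⟩ := exists_surjective_ker_of_range_le_range (range_comp_le_range x₀ b) hUV
  obtain ⟨f, hf, hker⟩ := exists_comp_eq_comp_and_ker_le_range b x₀ hs
  exact ⟨f, hf, fun x hx =>
    exists_eq_comp_of_range_le_range (range_le_range_of_comp_eq_comp hker (hx.trans hf.symm))⟩

end BezoutDomain

theorem gcd_of_solutions_is_solution_general {R : Type*} [CommRing R] [IsDomain R] [IsBezout R]
    {l m n : Type*} [Finite l] [Fintype m] [Fintype n] (hmn : Fintype.card m ≤ Fintype.card n)
    (A : Matrix l n R) (B : Matrix l m R) (h : ∃ X : Matrix m n R, B * X = A) :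
    ∃ F : Matrix m n R, B * F = A ∧
      ∀ X : Matrix m n R, B * X = A → ∃ M : Matrix n n R, X = F * M := by
  classical
  obtain ⟨X₀, rfl⟩ := h
  obtain ⟨f, hf, hdiv⟩ := exists_comp_eq_comp_and_forall_eq_comp B.toLin' X₀.toLin'
    (by simpa only [finrank_fintype_fun_eq_card] using hmn)
  obtain ⟨F, rfl⟩ := Matrix.toLin'.surjective f
  simp only [← Matrix.toLin'_mul, Matrix.toLin'.injective.eq_iff] at hf hdiv
  refine ⟨F, hf, fun X hX => ?_⟩
  obtain ⟨g, hg⟩ := hdiv X.toLin' (by rw [← Matrix.toLin'_mul, hX, Matrix.toLin'_mul])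
  obtain ⟨M, rfl⟩ := Matrix.toLin'.surjective g
  exact ⟨M, Matrix.toLin'.injective (hg.trans (Matrix.toLin'_mul F M).symm)⟩

/-- A left greatest common divisor of the solutions of a solvable matrix
equation `B * X = A` over a PID exists and is itself a solution. -/
theorem gcd_of_solutions_is_solution
    (R : Type*) [CommRing R] [IsDomain R] [IsPrincipalIdealRing R]
    (n : ℕ) (A B : Matrix (Fin n) (Fin n) R)
    (h : ∃ X : Matrix (Fin n) (Fin n) R, B * X = A) :
    ∃ F : Matrix (Fin n) (Fin n) R, B * F = A ∧
      ∀ X : Matrix (Fin n) (Fin n) R, B * X = A →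
        ∃ M : Matrix (Fin n) (Fin n) R, X = F * M :=
  gcd_of_solutions_is_solution_general le_rfl A B h
end

section
/- Let R be a principal ideal domain and let n be a natural number. Let A, B be n×n matrices over R. If the matrix equation B·X = A has at least one solution, then there exists an n×n matrix N over R such that B·N = A and for every n×n matrix X with B·X = A there exists an n×n matrix P with N = P·X. (In other words, a left least common multiple of the set of solutions of a solvable equation B·X = A, namely a common left multiple of all solutions, exists and is itself a solution.) -/
/-!
If the column space of `B` is projective, `B` splits over it, which yields a square matrix `E` with
`B * E = B` such that `E * X` depends only on `B * X`. All solutions `X` of `B * X = A` therefore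
share the same product `E * X`, which is again a solution because `B * (E * X) = B * X`. Over a
principal ideal domain the column space is a submodule of a free module, hence free.
-/

open Matrix

theorem exists_comp_eq_self_and_factorsThrough {R M N : Type*} [Semiring R]
    [AddCommMonoid M] [AddCommMonoid N] [Module R M] [Module R N]
    (f : M →ₗ[R] N) [Module.Projective R (LinearMap.range f)] :
    ∃ p : Module.End R M, f ∘ₗ p = f ∧ Function.FactorsThrough p f := by
  obtain ⟨s, hs⟩ :=
    f.rangeRestrict.exists_rightInverse_of_surjective f.range_rangeRestrict
  refine ⟨s ∘ₗ f.rangeRestrict, ?_, fun x y hxy ↦ congrArg s (Subtype.ext hxy)⟩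
  ext x
  exact congrArg Subtype.val (LinearMap.congr_fun hs (f.rangeRestrict x))

theorem mul_factorsThrough_mul_of_mulVec {R k l m n : Type*} [NonUnitalNonAssocSemiring R]
    [Fintype m] {E : Matrix k m R} {B : Matrix l m R}
    (h : Function.FactorsThrough (E *ᵥ ·) (B *ᵥ ·)) :
    Function.FactorsThrough (fun X : Matrix m n R ↦ E * X) (B * ·) := fun _ _ hXY ↦
  ext_col fun j ↦ h (congrArg (col · j) hXY)

section ProjectiveColumnSpace

variable {R l m n : Type*} [CommSemiring R] [Fintype m] (B : Matrix l m R)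
  [Module.Projective R (LinearMap.range B.mulVecLin)]

theorem exists_mul_eq_self_and_mulVec_factorsThrough :
    ∃ E : Matrix m m R, B * E = B ∧ Function.FactorsThrough (E *ᵥ ·) (B *ᵥ ·) := by
  classical
  obtain ⟨p, hBp, hp⟩ := exists_comp_eq_self_and_factorsThrough B.mulVecLin
  refine ⟨LinearMap.toMatrix' p, ext_iff_mulVec.2 fun v ↦ ?_, fun v w hvw ↦ ?_⟩
  · rw [← mulVec_mulVec, LinearMap.toMatrix'_mulVec]
    exact LinearMap.congr_fun hBp v
  · simpa only [LinearMap.toMatrix'_mulVec] using hp hvw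

theorem lcm_of_solutions_is_solution_general (A : Matrix l n R)
    (h : ∃ X : Matrix m n R, B * X = A) :
    ∃ N : Matrix m n R, B * N = A ∧
      ∃ P : Matrix m m R, ∀ X : Matrix m n R, B * X = A → N = P * X := by
  obtain ⟨X₀, hX₀⟩ := h
  obtain ⟨E, hBE, hE⟩ := exists_mul_eq_self_and_mulVec_factorsThrough B
  refine ⟨E * X₀, ?_, E, fun X hX ↦ ?_⟩
  · rw [← Matrix.mul_assoc, hBE, hX₀]
  · exact mul_factorsThrough_mul_of_mulVec hE (hX₀.trans hX.symm)

end ProjectiveColumnSpace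

/-- A left least common multiple of the solutions of a solvable matrix
equation `B * X = A` over a PID exists and is itself a solution. -/
theorem lcm_of_solutions_is_solution
    (R : Type*) [CommRing R] [IsDomain R] [IsPrincipalIdealRing R]
    (n : ℕ) (A B : Matrix (Fin n) (Fin n) R)
    (h : ∃ X : Matrix (Fin n) (Fin n) R, B * X = A) :
    ∃ N : Matrix (Fin n) (Fin n) R, B * N = A ∧
      ∀ X : Matrix (Fin n) (Fin n) R, B * X = A →
        ∃ P : Matrix (Fin n) (Fin n) R, N = P * X := by
  obtain ⟨N, hN, P, hP⟩ := lcm_of_solutions_is_solution_general B A h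
  exact ⟨N, hN, fun X hX ↦ ⟨P, hP X hX⟩⟩
end

section
/- Let R be a principal ideal domain and let n be a natural number. Let A, B be n×n matrices over R (indexed by Fin n) and suppose the matrix equation B·X = A has at least one solution. Then there exist natural numbers t and s with t + s = n, a bijection e : Fin n ≃ Fin t ⊕ Fin s, an invertible n×n matrix Q over R, and an n×n matrix F over R with B·F = A, such that for every n×n matrix X over R: B·X = A if and only if there exist matrices T₃ (of size s×t) and T₄ (of size s×s) over R with X = F · (Q · Mₑ(fromBlocks(I_t, 0, T₃, T₄)) · Q⁻¹), where Mₑ denotes reindexing a (Fin t ⊕ Fin s)-indexed matrix back to Fin n along the bijection e. (This describes the complete solution set of B·X = A as the set of right multiples of one fixed solution F by block lower triangular unimodular-type factors.) -/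
/-!
Write `A = B * X₀`, with `p` columns, where `B` has at most `p` columns. Over a Bézout domain the
range of `A` is free, so `ker A` is a free direct summand of `Rᵖ`: there is a basis `Q = [Q₁ | Q₂]`
of `Rᵖ` whose second part spans `ker A`. Since `rank A ≤ rank B`, the rank of `ker B` is at most the
number of columns of `Q₂`, so `ker B` is the column space of a matrix `K` of that width. Then the
matrix `F` with `F * Q = [X₀ * Q₁ | K]` is a solution, and `X` is a solution iff the columns of
`X * Q₁ - X₀ * Q₁` and of `X * Q₂` lie in `ker B`, i.e. iff
`X * Q = [X₀ * Q₁ + K * T₃ | K * T₄] = F * Q * [[1, 0], [T₃, T₄]]` for some `T₃`, `T₄`.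
-/

section FreeModules

open Module

variable {R M N : Type*} [CommRing R] [AddCommGroup M] [Module R M] [AddCommGroup N] [Module R N]

theorem free_of_free_ker_of_free_range (f : M →ₗ[R] N) [Free R f.ker] [Free R f.range] :
    Free R M :=
  have : Free R (M ⧸ f.ker) := .of_equiv f.quotKerEquivRange.symm
  .of_basis ((Free.chooseBasis R f.ker).sumQuot (Free.chooseBasis R (M ⧸ f.ker)))

theorem finite_ker_of_projective_range_s2 [Module.Finite R M] (f : M →ₗ[R] N)
    [Projective R f.range] : Module.Finite R f.ker := by
  have := finitePresentation_of_projective R f.range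
  rw [Finite.iff_fg, ← f.ker_rangeRestrict]
  exact FinitePresentation.fg_ker f.rangeRestrict f.surjective_rangeRestrict

theorem exists_basis_inr_mem_ker [StrongRankCondition R] [Module.Finite R M] (f : M →ₗ[R] N)
    [Free R f.ker] [Module.Finite R f.ker] [Free R f.range] :
    ∃ b : Basis (Fin (finrank R f.range) ⊕ Fin (finrank R f.ker)) R M,
      ∀ j, b (.inr j) ∈ f.ker := by
  have : Free R (M ⧸ f.ker) := .of_equiv f.quotKerEquivRange.symm
  let b := (finBasis R f.ker).sumQuot
    (finBasisOfFinrankEq R (M ⧸ f.ker) f.quotKerEquivRange.finrank_eq)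
  exact ⟨b.reindex (.sumComm _ _), fun j ↦ by simp [b]⟩

theorem free_of_isPrincipal [IsDomain R] [IsTorsionFree R M] (P : Submodule R M)
    [hP : P.IsPrincipal] : Free R P := by
  obtain ⟨x, rfl⟩ := hP
  obtain rfl | hx := eq_or_ne x 0
  · rw [Submodule.span_zero_singleton]
    infer_instance
  · exact .of_equiv (LinearEquiv.toSpanNonzeroSingleton R M x hx)

theorem free_of_injective_pi [IsDomain R] [IsBezout R] [Module.Finite R M] {n : ℕ}
    (f : M →ₗ[R] Fin n → R) (hf : Function.Injective f) : Free R M := by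
  induction n generalizing M with
  | zero =>
    have := hf.subsingleton
    infer_instance
  | succ n ih =>
    let g : M →ₗ[R] R := .proj 0 ∘ₗ f
    have := IsBezout.isPrincipal_of_FG g.range (Finite.iff_fg.mp inferInstance)
    have := free_of_isPrincipal g.range
    have := finite_ker_of_projective_range_s2 g
    have tail_injective :
        Function.Injective (LinearMap.funLeft R R Fin.succ ∘ₗ f ∘ₗ g.ker.subtype) := by
      rintro ⟨x, hx⟩ ⟨y, hy⟩ hxy
      refine Subtype.ext (hf (funext (Fin.cases ?_ (congrFun hxy))))
      exact (LinearMap.mem_ker.mp hx).trans (LinearMap.mem_ker.mp hy).symm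
    have := ih _ tail_injective
    exact free_of_free_ker_of_free_range g

theorem free_submodule_pi_of_isBezout [IsDomain R] [IsBezout R] {ι : Type*} [Finite ι]
    (P : Submodule R (ι → R)) [Module.Finite R P] : Free R P := by
  obtain ⟨n, ⟨e⟩⟩ := Finite.exists_equiv_fin ι
  exact free_of_injective_pi ((LinearEquiv.funCongrLeft R R e.symm).toLinearMap ∘ₗ P.subtype)
    ((LinearEquiv.funCongrLeft R R e.symm).injective.comp P.injective_subtype)

end FreeModules

section MatrixEquation

open Matrix Module

variable {R m ι κ τ σ ν : Type*} [CommRing R] [Fintype σ]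

theorem exists_range_mulVecLin_eq [StrongRankCondition R] (P : Submodule R (ι → R)) [Free R P]
    [Module.Finite R P] (hP : finrank R P ≤ Fintype.card σ) :
    ∃ K : Matrix ι σ R, K.mulVecLin.range = P := by
  classical
  obtain ⟨g⟩ := Function.Embedding.nonempty_of_card_le (by simpa using hP :
    Fintype.card (Fin (finrank R P)) ≤ Fintype.card σ)
  let f : (σ → R) →ₗ[R] P := (finBasis R P).equivFun.symm ∘ₗ LinearMap.funLeft R R g
  have range_f : f.range = ⊤ := LinearMap.range_eq_top.mpr <|
    (finBasis R P).equivFun.symm.surjective.comp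
      (LinearMap.funLeft_surjective_of_injective R R g g.injective)
  refine ⟨LinearMap.toMatrix' (P.subtype ∘ₗ f), ?_⟩
  rw [← toLin'_apply', toLin'_toMatrix', LinearMap.range_comp_of_range_eq_top _ range_f,
    P.range_subtype]

variable [Fintype ι]

theorem rank_add_finrank_ker_mulVecLin [IsDomain R] (B : Matrix m ι R) :
    B.rank + finrank R B.mulVecLin.ker = Fintype.card ι := by
  rw [rank, ← B.mulVecLin.quotKerEquivRange.finrank_eq,
    Submodule.finrank_quotient_add_finrank, finrank_pi]

theorem finrank_ker_mulVecLin_le_finrank_ker_mul [IsDomain R] [Fintype κ] (B : Matrix m ι R)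
    (X : Matrix ι κ R) (hcard : Fintype.card ι ≤ Fintype.card κ) :
    finrank R B.mulVecLin.ker ≤ finrank R (B * X).mulVecLin.ker := by
  have := rank_mul_le_left B X
  have := rank_add_finrank_ker_mulVecLin B
  have := rank_add_finrank_ker_mulVecLin (B * X)
  lia

theorem matrix_mul_eq_zero_iff_exists_eq_mul {B : Matrix m ι R} {K : Matrix ι σ R}
    (hK : K.mulVecLin.range = B.mulVecLin.ker) (D : Matrix ι ν R) :
    B * D = 0 ↔ ∃ T : Matrix σ ν R, D = K * T := by
  have col_mem_iff (j : ν) : B *ᵥ D.col j = 0 ↔ ∃ v, K *ᵥ v = D.col j :=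
    (SetLike.ext_iff.mp hK (D.col j)).symm
  constructor
  · intro hD
    choose T hT using fun j ↦ (col_mem_iff j).mp (funext fun i ↦ congrFun₂ hD i j)
    exact ⟨of fun i j ↦ T j i, ext fun i j ↦ (congrFun (hT j) i).symm⟩
  · rintro ⟨T, rfl⟩
    exact ext fun i j ↦ congrFun ((col_mem_iff j).mpr ⟨T.col j, rfl⟩) i

theorem exists_fromCols_mul_eq_one [StrongRankCondition R] [DecidableEq ι] (B : Matrix m ι R)
    [Free R B.mulVecLin.ker] [Module.Finite R B.mulVecLin.ker] [Free R B.mulVecLin.range] :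
    ∃ (Q₁ : Matrix ι (Fin B.rank) R) (Q₂ : Matrix ι (Fin (finrank R B.mulVecLin.ker)) R)
      (P : Matrix (Fin B.rank ⊕ Fin (finrank R B.mulVecLin.ker)) ι R),
      fromCols Q₁ Q₂ * P = 1 ∧ P * fromCols Q₁ Q₂ = 1 ∧ B * Q₂ = 0 := by
  obtain ⟨b, hb⟩ : ∃ b : Basis (Fin B.rank ⊕ Fin (finrank R B.mulVecLin.ker)) R (ι → R),
      ∀ j, b (.inr j) ∈ B.mulVecLin.ker := exists_basis_inr_mem_ker B.mulVecLin
  let c := Pi.basisFun R ι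
  refine ⟨(c.toMatrix b).toCols₁, (c.toMatrix b).toCols₂, b.toMatrix c, ?_, ?_, ?_⟩
  · rw [fromCols_toCols, c.toMatrix_mul_toMatrix_flip]
  · rw [fromCols_toCols, b.toMatrix_mul_toMatrix_flip]
  · exact ext fun i j ↦ congrFun (LinearMap.mem_ker.mp (hb j)) i

variable [Fintype κ] [DecidableEq κ] [Fintype τ]

theorem submatrix_mul_reindex_mul_inv (e : κ ≃ τ) {Q : Matrix κ τ R} {P : Matrix τ κ R}
    (hQP : Q * P = 1) (M : Matrix τ τ R) :
    Q.submatrix id e * reindex e.symm e.symm M * (Q.submatrix id e)⁻¹ = Q * M * P := by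
  have hinv : (Q.submatrix id e)⁻¹ = P.submatrix e id :=
    inv_eq_right_inv (by rw [submatrix_mul_equiv, hQP, submatrix_id_id])
  simp only [hinv, reindex_apply, Equiv.symm_symm, submatrix_mul_equiv, submatrix_id_id]

theorem matrix_mul_eq_mul_iff_eq_mul_conj [DecidableEq τ] {Q : Matrix κ τ R} {P : Matrix τ κ R}
    (hQP : Q * P = 1) (hPQ : P * Q = 1) (X : Matrix ν κ R) (G : Matrix ν τ R) (M : Matrix τ τ R) :
    X * Q = G * M ↔ X = G * P * (Q * M * P) := by
  have conj_mul : G * P * (Q * M * P) * Q = G * M :=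
    calc G * P * (Q * M * P) * Q = G * (P * Q) * M * (P * Q) := by simp only [Matrix.mul_assoc]
      _ = G * M := by rw [hPQ, Matrix.mul_one, Matrix.mul_one]
  rw [← conj_mul]
  exact (mul_left_injective_of_inv Q P hQP).eq_iff

theorem matrix_mul_eq_mul_iff_exists_mul_fromCols_eq [DecidableEq τ] {B : Matrix m ι R}
    {X₀ : Matrix ι κ R} {K : Matrix ι σ R} {Q₁ : Matrix κ τ R} {Q₂ : Matrix κ σ R}
    {P : Matrix (τ ⊕ σ) κ R} (hQP : fromCols Q₁ Q₂ * P = 1) (hQ₂ : B * X₀ * Q₂ = 0)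
    (hK : K.mulVecLin.range = B.mulVecLin.ker) (X : Matrix ι κ R) :
    B * X = B * X₀ ↔ ∃ (T₃ : Matrix σ τ R) (T₄ : Matrix σ σ R),
      X * fromCols Q₁ Q₂ =
        fromCols (X₀ * Q₁) K * (fromBlocks 1 0 T₃ T₄ : Matrix (τ ⊕ σ) (τ ⊕ σ) R) := by
  calc B * X = B * X₀
      ↔ B * X * fromCols Q₁ Q₂ = B * X₀ * fromCols Q₁ Q₂ :=
        (mul_left_injective_of_inv _ _ hQP).eq_iff.symm
    _ ↔ B * (X * Q₁ - X₀ * Q₁) = 0 ∧ B * (X * Q₂) = 0 := by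
        rw [mul_fromCols, mul_fromCols, fromCols_ext_iff, hQ₂, Matrix.mul_sub, sub_eq_zero,
          Matrix.mul_assoc, Matrix.mul_assoc, Matrix.mul_assoc]
    _ ↔ (∃ T₃ : Matrix σ τ R, X * Q₁ - X₀ * Q₁ = K * T₃) ∧
          ∃ T₄ : Matrix σ σ R, X * Q₂ = K * T₄ := by
        simp only [matrix_mul_eq_zero_iff_exists_eq_mul hK]
    _ ↔ _ := by
        simp only [mul_fromCols, fromCols_mul_fromBlocks, fromCols_ext_iff, sub_eq_iff_eq_add',
          Matrix.mul_one, Matrix.mul_zero, zero_add, exists_and_left, exists_and_right]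

attribute [local instance] free_submodule_pi_of_isBezout finite_ker_of_projective_range_s2

theorem solution_set_description_general [IsDomain R] [IsBezout R] [Finite m]
    (hcard : Fintype.card ι ≤ Fintype.card κ) (A : Matrix m κ R) (B : Matrix m ι R)
    (h : ∃ X : Matrix ι κ R, B * X = A) :
    ∃ t s : ℕ, t + s = Fintype.card κ ∧
      ∃ (e : κ ≃ Fin t ⊕ Fin s) (Q : Matrix κ κ R) (F : Matrix ι κ R),
        IsUnit Q ∧ B * F = A ∧
        ∀ X : Matrix ι κ R,
          B * X = A ↔ ∃ (T₃ : Matrix (Fin s) (Fin t) R) (T₄ : Matrix (Fin s) (Fin s) R),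
            X = F * (Q * reindex e.symm e.symm (fromBlocks 1 0 T₃ T₄) * Q⁻¹) := by
  classical
  obtain ⟨X₀, rfl⟩ := h
  obtain ⟨Q₁, Q₂, P, hQP, hPQ, hQ₂⟩ := exists_fromCols_mul_eq_one (B * X₀)
  obtain ⟨K, hK⟩ := exists_range_mulVecLin_eq (σ := Fin (finrank R (B * X₀).mulVecLin.ker))
    B.mulVecLin.ker (by simpa using finrank_ker_mulVecLin_le_finrank_ker_mul B X₀ hcard)
  have hcard_κ := rank_add_finrank_ker_mulVecLin (B * X₀)
  let e := Fintype.equivOfCardEq (by simp [hcard_κ] : Fintype.card κ =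
    Fintype.card (Fin (B * X₀).rank ⊕ Fin (finrank R (B * X₀).mulVecLin.ker)))
  let Q := (fromCols Q₁ Q₂).submatrix id e
  have isUnit_Q : IsUnit Q := .of_mul_eq_one (P.submatrix e id)
    (by rw [submatrix_mul_equiv, hQP, submatrix_id_id])
  let F := fromCols (X₀ * Q₁) K * P
  have solutions (X : Matrix ι κ R) : B * X = B * X₀ ↔ ∃ T₃ T₄,
      X = F * (Q * reindex e.symm e.symm (fromBlocks 1 0 T₃ T₄) * Q⁻¹) := by
    simp only [matrix_mul_eq_mul_iff_exists_mul_fromCols_eq hQP hQ₂ hK, F, Q,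
      submatrix_mul_reindex_mul_inv e hQP, matrix_mul_eq_mul_iff_eq_mul_conj hQP hPQ]
  have F_solution : B * F = B * X₀ := (solutions F).mpr ⟨0, 1, by
    simp [fromBlocks_one, mul_nonsing_inv Q ((isUnit_iff_isUnit_det Q).mp isUnit_Q)]⟩
  exact ⟨_, _, hcard_κ, e, Q, F, isUnit_Q, F_solution, solutions⟩

end MatrixEquation

/-- The complete solution set of a solvable matrix equation `B * X = A` over a
PID is the set of right multiples of a fixed solution `F` by factors
`Q * fromBlocks(I, 0, T₃, T₄) * Q⁻¹`. -/
theorem solution_set_description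
    (R : Type*) [CommRing R] [IsDomain R] [IsPrincipalIdealRing R]
    (n : ℕ) (A B : Matrix (Fin n) (Fin n) R)
    (h : ∃ X : Matrix (Fin n) (Fin n) R, B * X = A) :
    ∃ (t s : ℕ), t + s = n ∧
      ∃ (e : Fin n ≃ (Fin t ⊕ Fin s)) (Q : Matrix (Fin n) (Fin n) R)
        (F : Matrix (Fin n) (Fin n) R),
        IsUnit Q ∧ B * F = A ∧
        ∀ X : Matrix (Fin n) (Fin n) R,
          B * X = A ↔
            ∃ (T₃ : Matrix (Fin s) (Fin t) R) (T₄ : Matrix (Fin s) (Fin s) R),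
              X = F * (Q *
                (Matrix.reindex e.symm e.symm (Matrix.fromBlocks 1 0 T₃ T₄)) *
                Q⁻¹) := by
  simpa only [Fintype.card_fin] using solution_set_description_general le_rfl A B h
end

section
/- Let R be an integral domain, let t, s be natural numbers, and let ι = Fin t ⊕ Fin s be the index type for square matrices of size t + s over R. Let D be a t×t diagonal matrix over R all of whose diagonal entries are nonzero, and set Φ = fromBlocks(D, 0, 0, 0). Let U, V, Q be invertible ι×ι matrices over R and set B = V⁻¹ · Φ · U⁻¹. Let S be an ι×ι matrix over R whose top-right t×s block is zero, i.e. S = fromBlocks(S₁₁, 0, S₂₁, S₂₂), and set A = B · (U · S · Q⁻¹) and F = U · fromBlocks(S₁₁, 0, 0, I_s) · Q⁻¹. Then: (i) B·F = A; and (ii) for every ι×ι matrix X over R, B·X = A if and only if there exist an s×t matrix T₃ and an s×s matrix T₄ over R with X = F · (Q · fromBlocks(I_t, 0, T₃, T₄) · Q⁻¹). In particular F is a solution of B·X = A that left-divides every solution, i.e. F is a left greatest common divisor of the solution set. -/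
/-!
Since `Φ` vanishes outside its first block column, `B * U = fromCols C 0` with `C` left-cancellable.
In the coordinates `Y = U⁻¹ * X * Q` the equation `B * X = A` then reads
`fromCols C 0 * Y = fromCols C 0 * S`, which fixes the upper blocks of `Y` and leaves the lower ones
free: `Y = fromBlocks S₁₁ 0 T₃ T₄ = fromBlocks S₁₁ 0 0 1 * fromBlocks 1 0 T₃ T₄`.
-/

open Matrix

theorem toRows₁_eq_fromCols_iff {R m n p q : Type*} {Y : Matrix (m ⊕ n) (p ⊕ q) R}
    {A : Matrix m p R} {B : Matrix m q R} :
    Y.toRows₁ = fromCols A B ↔ ∃ T₃ T₄, Y = fromBlocks A B T₃ T₄ := by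
  constructor
  · intro h
    refine ⟨Y.toRows₂.toCols₁, Y.toRows₂.toCols₂, ?_⟩
    rw [← fromRows_fromCols_eq_fromBlocks, fromCols_toCols, ← h, fromRows_toRows]
  · rintro ⟨T₃, T₄, rfl⟩
    rw [← fromRows_fromCols_eq_fromBlocks, toRows₁_fromRows]

section NonUnitalSemiring

variable {R k l m n : Type*} [NonUnitalSemiring R]

theorem mul_mulVec_injective [Fintype l] [Fintype m] {A : Matrix k l R} {B : Matrix l m R}
    (hA : Function.Injective A.mulVec) (hB : Function.Injective B.mulVec) :
    Function.Injective (A * B).mulVec := by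
  simpa only [Function.comp_def, mulVec_mulVec] using hA.comp hB

theorem mul_right_injective_of_mulVec_injective [Fintype m] {A : Matrix l m R}
    (hA : Function.Injective A.mulVec) : Function.Injective fun B : Matrix m n R ↦ A * B := by
  cases isEmpty_or_nonempty n
  · exact Function.injective_of_subsingleton _
  · exact mul_right_injective_iff_mulVec_injective.2 hA

end NonUnitalSemiring

section Semiring

variable {R k l m n o p q : Type*} [Semiring R]

theorem fromRows_mulVec_injective_of_left [Fintype m] {A : Matrix k m R}
    (hA : Function.Injective A.mulVec) (B : Matrix l m R) :
    Function.Injective (fromRows A B).mulVec := by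
  intro v w h
  simp only [fromRows_mulVec, Sum.elim_eq_iff] at h
  exact hA h.1

theorem mul_fromBlocks_zero_zero [Fintype l] [Fintype m] (P : Matrix k (l ⊕ m) R)
    (A : Matrix l n R) (B : Matrix m n R) :
    P * fromBlocks A (0 : Matrix l o R) B 0 = fromCols (P * fromRows A B) 0 := by
  rw [← fromCols_fromRows_eq_fromBlocks, mul_fromCols, fromRows_zero, Matrix.mul_zero]

theorem fromCols_zero_mul [Fintype m] [Fintype n] (C : Matrix l m R) (Y : Matrix (m ⊕ n) o R) :
    fromCols C (0 : Matrix l n R) * Y = C * Y.toRows₁ := by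
  rw [← fromRows_toRows Y, fromCols_mul_fromRows, Matrix.zero_mul, add_zero, toRows₁_fromRows]

theorem fromCols_zero_mul_inj [Fintype m] [Fintype n] {C : Matrix l m R}
    (hC : Function.Injective C.mulVec) {Y Z : Matrix (m ⊕ n) o R} :
    fromCols C (0 : Matrix l n R) * Y = fromCols C (0 : Matrix l n R) * Z ↔
      Y.toRows₁ = Z.toRows₁ := by
  rw [fromCols_zero_mul, fromCols_zero_mul]
  exact (mul_right_injective_of_mulVec_injective hC).eq_iff

theorem fromCols_zero_mul_eq_mul_fromBlocks_iff [Fintype m] [Fintype n] {C : Matrix l m R}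
    (hC : Function.Injective C.mulVec) {Y : Matrix (m ⊕ n) (p ⊕ q) R} {S₁₁ : Matrix m p R}
    {S₁₂ : Matrix m q R} (S₂₁ : Matrix n p R) (S₂₂ : Matrix n q R) :
    fromCols C (0 : Matrix l n R) * Y =
        fromCols C (0 : Matrix l n R) * fromBlocks S₁₁ S₁₂ S₂₁ S₂₂ ↔
      ∃ T₃ T₄, Y = fromBlocks S₁₁ S₁₂ T₃ T₄ := by
  have toRows₁_S : (fromBlocks S₁₁ S₁₂ S₂₁ S₂₂).toRows₁ = fromCols S₁₁ S₁₂ :=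
    toRows₁_eq_fromCols_iff.2 ⟨S₂₁, S₂₂, rfl⟩
  rw [fromCols_zero_mul_inj hC, toRows₁_S, toRows₁_eq_fromCols_iff]

theorem fromBlocks_zero_eq_mul [Fintype n] [Fintype p] [DecidableEq n] [DecidableEq p]
    (A : Matrix m p R) (T₃ : Matrix n p R) (T₄ : Matrix n q R) :
    fromBlocks A 0 T₃ T₄ =
      fromBlocks A (0 : Matrix m n R) 0 1 * fromBlocks 1 (0 : Matrix p q R) T₃ T₄ := by
  simp [fromBlocks_multiply]

theorem units_inv_mul_cancel_left [Fintype m] [DecidableEq m] (U : (Matrix m m R)ˣ)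
    (X : Matrix m n R) : U⁻¹.val * (U.val * X) = X := by
  rw [← Matrix.mul_assoc, U.inv_mul, Matrix.one_mul]

theorem eq_units_mul_iff [Fintype m] [DecidableEq m] (U : (Matrix m m R)ˣ) {X Y : Matrix m n R} :
    X = U.val * Y ↔ U⁻¹.val * X = Y := by
  constructor
  · rintro rfl
    exact units_inv_mul_cancel_left U Y
  · rintro rfl
    exact (units_inv_mul_cancel_left U⁻¹ X).symm

theorem eq_mul_units_inv_iff [Fintype n] [DecidableEq n] (Q : (Matrix n n R)ˣ)
    {X Y : Matrix m n R} : X = Y * Q⁻¹.val ↔ X * Q.val = Y := by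
  constructor
  · rintro rfl
    rw [Matrix.mul_assoc, Q.inv_mul, Matrix.mul_one]
  · rintro rfl
    rw [Matrix.mul_assoc, Q.mul_inv, Matrix.mul_one]

theorem units_inv_mul_mul_eq_iff [Fintype m] [Fintype n] [DecidableEq m] [DecidableEq n]
    (U : (Matrix m m R)ˣ) (Q : (Matrix n n R)ˣ) {X Y : Matrix m n R} :
    U⁻¹.val * X * Q.val = Y ↔ X = U.val * Y * Q⁻¹.val := by
  rw [eq_mul_units_inv_iff, eq_units_mul_iff, Matrix.mul_assoc]

end Semiring

theorem gcd_explicit_form_general {R l m n p : Type*} [Semiring R]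
    [Fintype m] [Fintype n] [Fintype p] [DecidableEq m] [DecidableEq n] [DecidableEq p]
    {C : Matrix l m R} (hC : Function.Injective C.mulVec)
    (U : (Matrix (m ⊕ n) (m ⊕ n) R)ˣ) (Q : (Matrix (p ⊕ n) (p ⊕ n) R)ˣ)
    (S₁₁ : Matrix m p R) (S₂₁ : Matrix n p R) (S₂₂ : Matrix n n R) :
    let B := fromCols C (0 : Matrix l n R) * U⁻¹.val
    let S : Matrix (m ⊕ n) (p ⊕ n) R := fromBlocks S₁₁ 0 S₂₁ S₂₂
    let A := B * (U.val * S * Q⁻¹.val)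
    let F : Matrix (m ⊕ n) (p ⊕ n) R :=
      U.val * fromBlocks S₁₁ (0 : Matrix m n R) (0 : Matrix n p R) 1 * Q⁻¹.val
    B * F = A ∧
      ∀ X : Matrix (m ⊕ n) (p ⊕ n) R,
        B * X = A ↔
          ∃ (T₃ : Matrix n p R) (T₄ : Matrix n n R),
            X = F * (Q.val * fromBlocks 1 0 T₃ T₄ * Q⁻¹.val) := by
  intro B S A F
  have A_eq : A = fromCols C (0 : Matrix l n R) * S * Q⁻¹.val := by
    simp only [A, B, Matrix.mul_assoc, units_inv_mul_cancel_left]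
  have F_mul (T : Matrix (p ⊕ n) (p ⊕ n) R) :
      F * (Q.val * T * Q⁻¹.val) =
        U.val * (fromBlocks S₁₁ (0 : Matrix m n R) (0 : Matrix n p R) 1 * T) * Q⁻¹.val := by
    simp only [F, Matrix.mul_assoc, units_inv_mul_cancel_left]
  have solution_iff (X : Matrix (m ⊕ n) (p ⊕ n) R) :
      B * X = A ↔ ∃ T₃ T₄, X = F * (Q.val * fromBlocks 1 0 T₃ T₄ * Q⁻¹.val) := by
    calc B * X = A
      _ ↔ fromCols C (0 : Matrix l n R) * (U⁻¹.val * X * Q.val) =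
          fromCols C (0 : Matrix l n R) * S := by
        rw [A_eq, eq_mul_units_inv_iff]
        simp only [B, Matrix.mul_assoc]
      _ ↔ ∃ T₃ T₄, U⁻¹.val * X * Q.val = fromBlocks S₁₁ 0 T₃ T₄ :=
        fromCols_zero_mul_eq_mul_fromBlocks_iff hC S₂₁ S₂₂
      _ ↔ ∃ T₃ T₄, X = F * (Q.val * fromBlocks 1 0 T₃ T₄ * Q⁻¹.val) := by
        simp only [units_inv_mul_mul_eq_iff, F_mul, ← fromBlocks_zero_eq_mul]
  exact ⟨(solution_iff F).2 ⟨0, 1, by simp [fromBlocks_one]⟩, solution_iff⟩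

/-- For `B = V⁻¹ * Φ * U⁻¹` with `Φ = fromBlocks(D, 0, 0, 0)`, `D` diagonal
with nonzero diagonal entries, and `A = B * (U * S * Q⁻¹)` where the top-right
block of `S` vanishes, the matrix `F = U * fromBlocks(S₁₁, 0, 0, I) * Q⁻¹` is
a solution of `B * X = A` that left-divides every solution. -/
theorem gcd_explicit_form
    (R : Type*) [CommRing R] [IsDomain R] (t s : ℕ)
    (d : Fin t → R) (hd : ∀ i, d i ≠ 0)
    (U V Q : Matrix (Fin t ⊕ Fin s) (Fin t ⊕ Fin s) R)
    (hU : IsUnit U) (hV : IsUnit V) (hQ : IsUnit Q)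
    (S₁₁ : Matrix (Fin t) (Fin t) R) (S₂₁ : Matrix (Fin s) (Fin t) R)
    (S₂₂ : Matrix (Fin s) (Fin s) R) :
    letI Φ : Matrix (Fin t ⊕ Fin s) (Fin t ⊕ Fin s) R :=
      Matrix.fromBlocks (Matrix.diagonal d) 0 0 0
    letI B := V⁻¹ * Φ * U⁻¹
    letI S : Matrix (Fin t ⊕ Fin s) (Fin t ⊕ Fin s) R :=
      Matrix.fromBlocks S₁₁ 0 S₂₁ S₂₂
    letI A := B * (U * S * Q⁻¹)
    letI F := U * Matrix.fromBlocks S₁₁ 0 0 1 * Q⁻¹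
    B * F = A ∧
      ∀ X : Matrix (Fin t ⊕ Fin s) (Fin t ⊕ Fin s) R,
        B * X = A ↔
          ∃ (T₃ : Matrix (Fin s) (Fin t) R) (T₄ : Matrix (Fin s) (Fin s) R),
            X = F * (Q * Matrix.fromBlocks 1 0 T₃ T₄ * Q⁻¹) := by
  rcases hU, hV, hQ with ⟨⟨U, rfl⟩, ⟨V, rfl⟩, ⟨Q, rfl⟩⟩
  have hD : Function.Injective (diagonal d).mulVec :=
    mulVec_injective_of_det_ne_zero (by simpa [det_diagonal, Finset.prod_ne_zero_iff] using hd)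
  have hC : Function.Injective
      (V⁻¹.val * fromRows (diagonal d) (0 : Matrix (Fin s) (Fin t) R)).mulVec :=
    mul_mulVec_injective (mulVec_injective_of_isUnit V⁻¹.isUnit)
      (fromRows_mulVec_injective_of_left hD 0)
  simpa only [mul_fromBlocks_zero_zero, coe_units_inv] using
    gcd_explicit_form_general hC U Q S₁₁ S₂₁ S₂₂
end

section
/- Let R be an integral domain, let t, s be natural numbers, and let ι = Fin t ⊕ Fin s be the index type for square matrices of size t + s over R. Let D be a t×t diagonal matrix over R all of whose diagonal entries are nonzero, and set Φ = fromBlocks(D, 0, 0, 0). Let U, V be invertible ι×ι matrices over R and set B = V⁻¹ · Φ · U⁻¹. Then for every ι×ι matrix X over R the following are equivalent: B·X = 0 if and only if there exist an s×t matrix Y₁ and an s×s matrix Y₂ over R with X = U · fromBlocks(0, 0, Y₁, Y₂). (This describes the right annihilator of B as the set of matrices U·[0; Y] with arbitrary bottom block Y.) -/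
/-!
A matrix that acts injectively on column vectors can be cancelled on the left of a product.
Cancelling `V⁻¹`, and then `D` in the top block row, turns `B * X = 0` into the vanishing of the top
block row of `U⁻¹ * X`, whatever its bottom block row is.
-/

open Matrix

section

variable {R l m n o p q : Type*}

theorem mul_eq_zero_iff_of_mulVec_injective [NonUnitalNonAssocSemiring R] [Fintype m]
    {A : Matrix l m R} (hA : Function.Injective A.mulVec) {M : Matrix m n R} :
    A * M = 0 ↔ M = 0 := by
  refine ⟨fun h => ext_col fun j => hA ?_, fun h => by rw [h, Matrix.mul_zero]⟩
  calc
    A *ᵥ M.col j = (A * M).col j := rfl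
    _ = 0 := by rw [h]; rfl
    _ = A *ᵥ 0 := (mulVec_zero A).symm

theorem mulVec_diagonal_injective [NonUnitalNonAssocSemiring R] [Fintype m] [DecidableEq m]
    {d : m → R} (hd : ∀ i, IsLeftRegular (d i)) : Function.Injective (diagonal d).mulVec :=
  fun v w h => funext fun i => hd i <| by
    simpa only [mulVec_diagonal] using congrFun h i

theorem fromBlocks_zero_mul_eq_zero_iff [Semiring R] [Fintype m] [Fintype n]
    {D : Matrix l m R} (hD : Function.Injective D.mulVec) {Z : Matrix (m ⊕ n) p R} :
    (fromBlocks D 0 0 0 : Matrix (l ⊕ o) (m ⊕ n) R) * Z = 0 ↔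
      ∃ Y : Matrix n p R, Z = fromRows 0 Y := by
  have product_eq : (fromBlocks D 0 0 0 : Matrix (l ⊕ o) (m ⊕ n) R) * Z =
      fromRows (D * Z.toRows₁) 0 := by
    conv_lhs => rw [← fromRows_toRows Z]
    simp only [fromBlocks_mul_fromRows, Matrix.zero_mul, add_zero]
  rw [product_eq, ← fromRows_zero, fromRows_ext_iff, and_iff_left rfl,
    mul_eq_zero_iff_of_mulVec_injective hD]
  constructor
  · intro top_eq_zero
    exact ⟨Z.toRows₂, by rw [← top_eq_zero, fromRows_toRows]⟩
  · rintro ⟨Y, rfl⟩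
    exact toRows₁_fromRows 0 Y

theorem eq_mul_iff_nonsing_inv_mul_eq [CommRing R] [Fintype m] [DecidableEq m] {U : Matrix m m R}
    (hU : IsUnit U) {X Y : Matrix m n R} : X = U * Y ↔ U⁻¹ * X = Y := by
  have hdet : IsUnit U.det := (isUnit_iff_isUnit_det U).1 hU
  constructor
  · rintro rfl
    exact nonsing_inv_mul_cancel_left U Y hdet
  · rintro rfl
    exact (mul_nonsing_inv_cancel_left U X hdet).symm

theorem exists_eq_mul_fromRows_zero_iff [Semiring R] [Fintype m] [Fintype n]
    {U : Matrix l (m ⊕ n) R} {X : Matrix l (p ⊕ q) R} :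
    (∃ Y : Matrix n (p ⊕ q) R, X = U * fromRows (0 : Matrix m (p ⊕ q) R) Y) ↔
      ∃ (Y₁ : Matrix n p R) (Y₂ : Matrix n q R), X = U * fromBlocks (0 : Matrix m p R) 0 Y₁ Y₂ := by
  simp only [← fromRows_fromCols_eq_fromBlocks, fromCols_zero]
  constructor
  · rintro ⟨Y, hX⟩
    exact ⟨Y.toCols₁, Y.toCols₂, by rwa [fromCols_toCols]⟩
  · rintro ⟨Y₁, Y₂, hX⟩
    exact ⟨fromCols Y₁ Y₂, hX⟩

theorem right_annihilator_description_general [CommRing R] [Fintype l] [Fintype o]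
    [Fintype m] [DecidableEq m] [Fintype n] [DecidableEq n]
    {D : Matrix l m R} (hD : Function.Injective D.mulVec)
    {P : Matrix q (l ⊕ o) R} (hP : Function.Injective P.mulVec)
    {U : Matrix (m ⊕ n) (m ⊕ n) R} (hU : IsUnit U) (X : Matrix (m ⊕ n) p R) :
    P * (fromBlocks D 0 0 0 : Matrix (l ⊕ o) (m ⊕ n) R) * U⁻¹ * X = 0 ↔
      ∃ Y : Matrix n p R, X = U * fromRows (0 : Matrix m p R) Y := by
  simp only [eq_mul_iff_nonsing_inv_mul_eq hU]
  rw [Matrix.mul_assoc, Matrix.mul_assoc, mul_eq_zero_iff_of_mulVec_injective hP,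
    fromBlocks_zero_mul_eq_zero_iff hD]

end

/-- The right annihilator of `B = V⁻¹ * fromBlocks(D, 0, 0, 0) * U⁻¹`, with
`D` diagonal with nonzero diagonal entries and `U, V` invertible, consists of
the matrices `U * fromBlocks(0, 0, Y₁, Y₂)` with arbitrary bottom blocks. -/
theorem right_annihilator_description
    (R : Type*) [CommRing R] [IsDomain R] (t s : ℕ)
    (d : Fin t → R) (hd : ∀ i, d i ≠ 0)
    (U V : Matrix (Fin t ⊕ Fin s) (Fin t ⊕ Fin s) R)
    (hU : IsUnit U) (hV : IsUnit V) :
    letI Φ : Matrix (Fin t ⊕ Fin s) (Fin t ⊕ Fin s) R :=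
      Matrix.fromBlocks (Matrix.diagonal d) 0 0 0
    letI B := V⁻¹ * Φ * U⁻¹
    ∀ X : Matrix (Fin t ⊕ Fin s) (Fin t ⊕ Fin s) R,
      B * X = 0 ↔
        ∃ (Y₁ : Matrix (Fin s) (Fin t) R) (Y₂ : Matrix (Fin s) (Fin s) R),
          X = U * Matrix.fromBlocks 0 0 Y₁ Y₂ := by
  intro X
  have hD := mulVec_diagonal_injective fun i => (IsRegular.of_ne_zero (hd i)).left
  have hV_inv := mulVec_injective_of_isUnit (isUnit_nonsing_inv_iff.2 hV)
  exact (right_annihilator_description_general hD hV_inv hU X).trans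
    exists_eq_mul_fromRows_zero_iff
end

section
/- Over the integers ℤ, let A = diag(1, 2, 6, 0, 0, 0, 0) be the 7×7 diagonal matrix, let B be the 7×7 integer matrix with rows (0,1,0,0,0,0,0), (0,−2,2,0,0,0,0), (1,0,0,0,0,0,0), (0,0,0,0,0,0,0), (−2,0,−12,0,12,0,0), (0,0,0,0,0,0,0), (−2,0,−4,4,0,0,0), and let F be the 7×7 integer matrix with rows (0,0,6,0,0,0,0), (1,0,0,0,0,0,0), (1,1,0,0,0,0,0), (1,1,3,0,0,0,0), (1,1,1,0,0,0,0), (0,0,0,0,0,1,0), (0,0,0,0,0,0,1). Then B·F = A, and for every 7×7 integer matrix X with B·X = A there exists a 7×7 integer matrix M with X = F·M. (F is a left greatest common divisor of the solutions of B·X = A over ℤ and is itself a solution.) -/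
/-!
The left quotient by `F` is a linear function `G X` of the solution `X`: there are integer matrices
`G` and `C` with `4 (1 - F G) = C B` and `C A = 0`. Hence `4 (X - F G X) = C B X = C A = 0` for
every solution `X`, and `X = F (G X)` as soon as `4` can be cancelled.
-/

theorem eq_mul_mul_of_smul_one_sub_mul_eq {S R l m n p : Type*} [Ring R] [Monoid S]
    [DistribMulAction S R] [IsScalarTower S R R] [Fintype l] [Fintype m] [Fintype n]
    [DecidableEq n] {s : S} (hs : IsSMulRegular R s) {A : Matrix m p R} {B : Matrix m n R}
    {F : Matrix n l R} {G : Matrix l n R} {C : Matrix n m R} {X : Matrix n p R}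
    (hFG : s • (1 - F * G) = C * B) (hCA : C * A = 0) (hX : B * X = A) :
    X = F * (G * X) := by
  have hsX : s • (X - F * (G * X)) = 0 := calc
    s • (X - F * (G * X)) = s • (1 - F * G) * X := by
      rw [Matrix.smul_mul, Matrix.sub_mul, Matrix.one_mul, Matrix.mul_assoc]
    _ = C * A := by rw [hFG, Matrix.mul_assoc, hX]
    _ = 0 := hCA
  exact sub_eq_zero.mp (hs.matrix.right_eq_zero_of_smul hsX)

namespace GcdExample

/-- The right-hand side `A` of the equation `B * X = A`. -/
def rhs : Matrix (Fin 7) (Fin 7) ℤ :=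
  Matrix.diagonal ![1, 2, 6, 0, 0, 0, 0]

/-- The coefficient matrix `B` of the equation `B * X = A`. -/
def coeff : Matrix (Fin 7) (Fin 7) ℤ :=
  !![0, 1, 0, 0, 0, 0, 0;
     0, -2, 2, 0, 0, 0, 0;
     1, 0, 0, 0, 0, 0, 0;
     0, 0, 0, 0, 0, 0, 0;
     -2, 0, -12, 0, 12, 0, 0;
     0, 0, 0, 0, 0, 0, 0;
     -2, 0, -4, 4, 0, 0, 0]

/-- The solution `F` of `B * X = A` that left-divides all the others. -/
def leftGcd : Matrix (Fin 7) (Fin 7) ℤ :=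
  !![0, 0, 6, 0, 0, 0, 0;
     1, 0, 0, 0, 0, 0, 0;
     1, 1, 0, 0, 0, 0, 0;
     1, 1, 3, 0, 0, 0, 0;
     1, 1, 1, 0, 0, 0, 0;
     0, 0, 0, 0, 0, 1, 0;
     0, 0, 0, 0, 0, 0, 1]

/-- The matrix `G` for which `G * X` is the left quotient of a solution `X` by `F`. It comes from
solving rows 1, 2, 4, 5 and 6 (counted from 0) of `X = F * M` for `M`. -/
def quotient : Matrix (Fin 7) (Fin 7) ℤ :=
  !![0, 1, 0, 0, 0, 0, 0;
     0, -1, 1, 0, 0, 0, 0;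
     0, 0, -1, 0, 1, 0, 0;
     0, 0, 0, 0, 0, 0, 0;
     0, 0, 0, 0, 0, 0, 0;
     0, 0, 0, 0, 0, 1, 0;
     0, 0, 0, 0, 0, 0, 1]

/-- The matrix `C` expressing the remaining rows 0 and 3 of `X = F * M`, multiplied by 4, as
combinations of rows 4 and 6 of `B * X = A` (counted from 0), where `A` vanishes. -/
def certificate : Matrix (Fin 7) (Fin 7) ℤ :=
  !![0, 0, 0, 0, -2, 0, 0;
     0, 0, 0, 0, 0, 0, 0;
     0, 0, 0, 0, 0, 0, 0;
     0, 0, 0, 0, -1, 0, 1;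
     0, 0, 0, 0, 0, 0, 0;
     0, 0, 0, 0, 0, 0, 0;
     0, 0, 0, 0, 0, 0, 0]

theorem coeff_mul_leftGcd : coeff * leftGcd = rhs := by decide

theorem smul_one_sub_leftGcd_mul_quotient :
    2 ^ 2 • (1 - leftGcd * quotient) = certificate * coeff := by decide

theorem certificate_mul_rhs : certificate * rhs = 0 := by decide

end GcdExample

open GcdExample in
theorem example_gcd_of_solutions_general {R : Type*} [Ring R] (h2 : IsSMulRegular R (2 : ℕ)) :
    letI φ := (Int.castRingHom R).mapMatrix (m := Fin 7)
    φ coeff * φ leftGcd = φ rhs ∧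
      ∀ X : Matrix (Fin 7) (Fin 7) R, φ coeff * X = φ rhs →
        ∃ M : Matrix (Fin 7) (Fin 7) R, X = φ leftGcd * M := by
  set φ := (Int.castRingHom R).mapMatrix (m := Fin 7)
  refine ⟨by rw [← map_mul, coeff_mul_leftGcd], fun X hX => ⟨φ quotient * X, ?_⟩⟩
  have hFG : 2 ^ 2 • (1 - φ leftGcd * φ quotient) = φ certificate * φ coeff := by
    rw [← map_mul, ← map_mul, ← map_one φ, ← map_sub, ← map_nsmul,
      smul_one_sub_leftGcd_mul_quotient]
  have hCA : φ certificate * φ rhs = 0 := by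
    rw [← map_mul, certificate_mul_rhs, map_zero]
  exact eq_mul_mul_of_smul_one_sub_mul_eq (h2.pow 2) hFG hCA hX

/-- Concrete example over `ℤ`: `F` is a left greatest common divisor of the
solutions of `B * X = A` and is itself a solution. -/
theorem example_gcd_of_solutions :
    letI A : Matrix (Fin 7) (Fin 7) ℤ :=
      Matrix.diagonal ![1, 2, 6, 0, 0, 0, 0]
    letI B : Matrix (Fin 7) (Fin 7) ℤ :=
      !![0, 1, 0, 0, 0, 0, 0;
         0, -2, 2, 0, 0, 0, 0;
         1, 0, 0, 0, 0, 0, 0;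
         0, 0, 0, 0, 0, 0, 0;
         -2, 0, -12, 0, 12, 0, 0;
         0, 0, 0, 0, 0, 0, 0;
         -2, 0, -4, 4, 0, 0, 0]
    letI F : Matrix (Fin 7) (Fin 7) ℤ :=
      !![0, 0, 6, 0, 0, 0, 0;
         1, 0, 0, 0, 0, 0, 0;
         1, 1, 0, 0, 0, 0, 0;
         1, 1, 3, 0, 0, 0, 0;
         1, 1, 1, 0, 0, 0, 0;
         0, 0, 0, 0, 0, 1, 0;
         0, 0, 0, 0, 0, 0, 1]
    B * F = A ∧
      ∀ X : Matrix (Fin 7) (Fin 7) ℤ, B * X = A →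
        ∃ M : Matrix (Fin 7) (Fin 7) ℤ, X = F * M :=
  example_gcd_of_solutions_general (nsmul_right_injective two_ne_zero)
end
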